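/- arXiv:1107.4545 — 2 statements merged into one kernel-verified Lean document; each statement's English description precedes it below -/
import Mathlib

section
/- Criterion of extremeness (Lemma 4.3): Let V be a finite-dimensional real vector space, let C¹ and C² be closed convex cones in V with C² salient, let α : V → ℝ be a linear functional, and let g ∈ V be a nonzero vector with ray R = {t·g : t ≥ 0}. Assume: (i) C¹ ∩ ker α = R and C¹ ⊆ {α ≥ 0}; (ii) C² ⊆ {α ≥ 0}; (iii) g ∉ C² and −g ∉ C². Then R is an extremal ray of the Minkowski sum C¹ + C², i.e. whenever x, y ∈ C¹ + C² satisfy x + y ∈ R, both x ∈ R and y ∈ R. -/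
open Pointwise

/-- Criterion of extremeness (Lemma 4.3): if `C¹`, `C²` are closed convex cones in a
finite-dimensional real vector space, `C²` is salient, `α` is a linear functional,
`g ≠ 0` generates the ray `R`, `C¹ ∩ ker α = R`, both cones lie in `{α ≥ 0}`, and
neither `g` nor `-g` lies in `C²`, then `R` is an extremal ray of `C¹ + C²`. -/
theorem extremeness_criterion
    {V : Type*} [NormedAddCommGroup V] [NormedSpace ℝ V] [FiniteDimensional ℝ V]
    (C1 C2 : Set V)
    (hC1add : ∀ x ∈ C1, ∀ y ∈ C1, x + y ∈ C1)
    (hC1smul : ∀ (t : ℝ), 0 ≤ t → ∀ x ∈ C1, t • x ∈ C1)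
    (hC1closed : IsClosed C1)
    (hC2add : ∀ x ∈ C2, ∀ y ∈ C2, x + y ∈ C2)
    (hC2smul : ∀ (t : ℝ), 0 ≤ t → ∀ x ∈ C2, t • x ∈ C2)
    (hC2closed : IsClosed C2)
    (hC2salient : ∀ x ∈ C2, -x ∈ C2 → x = 0)
    (α : V →ₗ[ℝ] ℝ) (g : V) (hg : g ≠ 0)
    (R : Set V) (hR : R = {x | ∃ t : ℝ, 0 ≤ t ∧ x = t • g})
    (hker : C1 ∩ {x | α x = 0} = R)
    (hC1pos : C1 ⊆ {x | 0 ≤ α x})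
    (hC2pos : C2 ⊆ {x | 0 ≤ α x})
    (hgC2 : g ∉ C2) (hgC2' : -g ∉ C2) :
    ∀ x ∈ C1 + C2, ∀ y ∈ C1 + C2, x + y ∈ R → x ∈ R ∧ y ∈ R := by
  rintro x ⟨a, ha, b, hb, rfl⟩ y ⟨c, hc, d, hd, rfl⟩ hxy
  have hmem : ∀ z, z ∈ R ↔ ∃ t : ℝ, 0 ≤ t ∧ z = t • g := by
    intro z; rw [hR]; rfl
  have hR0 : ∀ z, z ∈ R → α z = 0 := by
    intro z hz
    rw [← hker] at hz
    exact hz.2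
  have h0 := hR0 _ hxy
  simp only [map_add] at h0
  have h1 : 0 ≤ α a := hC1pos ha
  have h2 : 0 ≤ α c := hC1pos hc
  have h3 : 0 ≤ α b := hC2pos hb
  have h4 : 0 ≤ α d := hC2pos hd
  have haR : a ∈ R := by
    rw [← hker]; exact ⟨ha, show α a = 0 by linarith⟩
  have hcR : c ∈ R := by
    rw [← hker]; exact ⟨hc, show α c = 0 by linarith⟩
  obtain ⟨s, hs, hsa⟩ := (hmem _).1 haR
  obtain ⟨t, ht, htc⟩ := (hmem _).1 hcR
  obtain ⟨r, hr, hrx⟩ := (hmem _).1 hxy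
  have hbd : b + d = (r - s - t) • g := by
    have h5 : a + b + (c + d) = r • g := hrx
    rw [sub_smul, sub_smul, ← h5, ← hsa, ← htc]
    abel
  have hbdm := hC2add b hb d hd
  rw [hbd] at hbdm
  have hk : r - s - t = 0 := by
    rcases lt_trichotomy (r - s - t) 0 with h | h | h
    · exfalso
      apply hgC2'
      have h6 := hC2smul (-(r - s - t)⁻¹) (by
        have := inv_lt_zero.2 h
        linarith) _ hbdm
      rwa [smul_smul, neg_mul, inv_mul_cancel₀ h.ne, neg_smul, one_smul] at h6
    · exact h
    · exfalso
      apply hgC2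
      have h6 := hC2smul (r - s - t)⁻¹ (inv_pos.2 h).le _ hbdm
      rwa [smul_smul, inv_mul_cancel₀ h.ne', one_smul] at h6
  rw [hk, zero_smul] at hbd
  have hdb : d = -b := (neg_eq_of_add_eq_zero_right hbd).symm
  have hb0 : b = 0 := hC2salient b hb (hdb ▸ hd)
  have hd0 : d = 0 := by rw [hdb, hb0, neg_zero]
  subst hb0 hd0
  simpa using ⟨haR, hcR⟩
end

section
/- Let V be a finite-dimensional real vector space and let C ⊆ V be a closed salient convex cone with C ≠ {0}. Let α, β : V → ℝ be linear functionals with no common zero on C \ {0}, i.e. for every x ∈ C \ {0} one has α(x) ≠ 0 or β(x) ≠ 0. Then there exist real numbers b and c, both nonzero, such that b·α(x) + c·β(x) > 0 for every x ∈ C \ {0}. -/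
/-- If `α` and `β` are linear functionals with no common zero on `C \ {0}`, where `C`
is a nontrivial closed salient convex cone, then there are nonzero reals `b`, `c`
with `b•α + c•β` strictly positive on `C \ {0}`. -/
theorem exists_positive_combination
    {V : Type*} [NormedAddCommGroup V] [NormedSpace ℝ V] [FiniteDimensional ℝ V]
    (C : Set V)
    (hCadd : ∀ x ∈ C, ∀ y ∈ C, x + y ∈ C)
    (hCsmul : ∀ (t : ℝ), 0 ≤ t → ∀ x ∈ C, t • x ∈ C)
    (hCclosed : IsClosed C)
    (hCsalient : ∀ x ∈ C, -x ∈ C → x = 0)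
    (h0 : (0 : V) ∈ C) (hne : C ≠ {0})
    (α β : V →ₗ[ℝ] ℝ)
    (hcommon : ∀ x ∈ C \ {0}, α x ≠ 0 ∨ β x ≠ 0) :
    ∃ b c : ℝ, b ≠ 0 ∧ c ≠ 0 ∧ ∀ x ∈ C \ {0}, 0 < b * α x + c * β x := by
  have : ProperSpace V := FiniteDimensional.proper ℝ V
  have hconv : Convex ℝ (C \ {0}) := by
    rintro x ⟨hx, hx0⟩ y ⟨hy, hy0⟩ a b ha hb hab
    refine ⟨hCadd _ (hCsmul a ha x hx) _ (hCsmul b hb y hy), ?_⟩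
    intro h
    have h : a • x + b • y = 0 := h
    have hax : a • x = 0 := by
      apply hCsalient _ (hCsmul a ha x hx)
      rw [← eq_neg_of_add_eq_zero_right h]
      exact hCsmul b hb y hy
    have hby : b • y = 0 := by rwa [hax, zero_add] at h
    have ha0 : a = 0 := (smul_eq_zero.1 hax).resolve_right hx0
    have hb0 : b = 0 := (smul_eq_zero.1 hby).resolve_right hy0
    rw [ha0, hb0] at hab
    norm_num at hab
  have hK : IsCompact (C ∩ Metric.sphere (0 : V) 1) :=
    (isCompact_sphere (0 : V) 1).inter_left hCclosed
  have hKs : C ∩ Metric.sphere (0 : V) 1 ⊆ C \ {0} := by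
    rintro x ⟨hx, hx1⟩
    refine ⟨hx, ?_⟩
    rintro rfl
    simp at hx1
  have hpos : ∀ k ∈ C ∩ Metric.sphere (0 : V) 1, ∃ g : V →L[ℝ] ℝ,
      (∀ x ∈ C, 0 ≤ g x) ∧ 0 < g k := by
    intro k hk
    have hkn : -k ∉ C := fun h => (hKs hk).2 (hCsalient k hk.1 h)
    have hCc : Convex ℝ C := fun x hx y hy a b ha hb _ =>
      hCadd _ (hCsmul a ha x hx) _ (hCsmul b hb y hy)
    obtain ⟨g, u, hu, hg⟩ := geometric_hahn_banach_point_closed hCc hCclosed hkn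
    have hu0 : u < 0 := by simpa using hg 0 h0
    refine ⟨g, ?_, ?_⟩
    · intro x hx
      by_contra hlt
      push Not at hlt
      have h := hg _ (hCsmul (u / g x) (div_nonneg_of_nonpos hu0.le hlt.le) x hx)
      rw [map_smul, smul_eq_mul, div_mul_cancel₀ _ hlt.ne] at h
      exact lt_irrefl _ h
    · rw [map_neg] at hu
      linarith
  choose! g hg0 hgk using hpos
  obtain ⟨t, htK, ht⟩ := hK.elim_nhds_subcover (fun k => {x | 0 < g k x}) (fun k hk =>
    (isOpen_lt continuous_const (g k).continuous).mem_nhds (hgk k hk))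
  obtain ⟨F, hF⟩ : ∃ F : V →L[ℝ] ℝ, F = ∑ k ∈ t, g k := ⟨_, rfl⟩
  have hFK : ∀ x ∈ C ∩ Metric.sphere (0 : V) 1, 0 < F x := by
    intro x hx
    obtain ⟨k, hk, hkx⟩ := Set.mem_iUnion₂.1 (ht hx)
    rw [hF, ContinuousLinearMap.sum_apply]
    exact Finset.sum_pos' (fun i hi => hg0 i (htK i hi) x hx.1) ⟨k, hk, hkx⟩
  obtain ⟨m, hm, hmF⟩ := hK.exists_forall_le' F.continuous.continuousOn hFK
  have hFn : ∀ x ∈ C \ {0}, m * ‖x‖ ≤ F x := by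
    rintro x ⟨hx, hx0⟩
    have hn : 0 < ‖x‖ := norm_pos_iff.2 hx0
    have h := hmF (‖x‖⁻¹ • x) ⟨hCsmul _ (by positivity) x hx, by
      simp [norm_smul, hn.ne']⟩
    rw [map_smul, smul_eq_mul, inv_mul_eq_div, le_div_iff₀ hn] at h
    exact h
  obtain ⟨B, hB⟩ : ∃ B : Set V, B = C ∩ {x | F x = 1} := ⟨_, rfl⟩
  have hHs : B ⊆ C \ {0} := by
    rw [hB]
    rintro x ⟨hx, hx1⟩
    refine ⟨hx, ?_⟩
    rintro rfl
    simp at hx1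
  have hBF : ∀ x ∈ B, F x = 1 := by
    rw [hB]
    exact fun x hx => hx.2
  have hH : IsCompact B := by
    apply Metric.isCompact_of_isClosed_isBounded
    · rw [hB]
      exact hCclosed.inter (isClosed_eq F.continuous continuous_const)
    · refine isBounded_iff_forall_norm_le.2 ⟨1 / m, fun x hx => ?_⟩
      have h := hFn x (hHs hx)
      rw [hBF x hx] at h
      rw [le_div_iff₀ hm]
      linarith
  have hBc : Convex ℝ B := by
    rw [hB]
    rintro x ⟨hx, hx1⟩ y ⟨hy, hy1⟩ a b ha hb hab
    refine ⟨hCadd _ (hCsmul a ha x hx) _ (hCsmul b hb y hy), ?_⟩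
    have hx1 : F x = 1 := hx1
    have hy1 : F y = 1 := hy1
    simp [hx1, hy1, hab]
  have hαc : Continuous α := α.continuous_of_finiteDimensional
  have hβc : Continuous β := β.continuous_of_finiteDimensional
  have hS := hH.image (f := α.prod β) (hαc.prodMk hβc)
  have hSc := hBc.linear_image (α.prod β)
  have hS0 : (0 : ℝ × ℝ) ∉ (α.prod β) '' B := by
    rintro ⟨x, hx, hx0⟩
    have h1 : α x = 0 := congrArg Prod.fst hx0
    have h2 : β x = 0 := congrArg Prod.snd hx0
    rcases hcommon x (hHs hx) with h | h
    · exact h h1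
    · exact h h2
  obtain ⟨f, u, hu, hf⟩ := geometric_hahn_banach_point_closed hSc hS.isClosed hS0
  rw [map_zero] at hu
  obtain ⟨M, hM⟩ := hH.exists_bound_of_continuousOn hαc.continuousOn
  obtain ⟨N, hN⟩ := hH.exists_bound_of_continuousOn hβc.continuousOn
  obtain ⟨d, hd, hdlt⟩ : ∃ d : ℝ, 0 < d ∧ d * (|M| + |N|) < u := by
    have hp : 0 < |M| + |N| + 1 := by positivity
    refine ⟨u / (|M| + |N| + 1), by positivity, ?_⟩
    rw [div_mul_eq_mul_div, div_lt_iff₀ hp]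
    nlinarith
  have hpert : ∀ t : ℝ, ∃ s : ℝ, s ≠ 0 ∧ |s - t| ≤ d := by
    intro t
    by_cases ht : t = 0
    · exact ⟨d, hd.ne', by simp [ht, abs_of_pos hd]⟩
    · exact ⟨t, ht, by simpa using hd.le⟩
  obtain ⟨b, hb, hbd⟩ := hpert (f (1, 0))
  obtain ⟨c, hc, hcd⟩ := hpert (f (0, 1))
  have key : ∀ x ∈ B, 0 < b * α x + c * β x := by
    intro x hx
    have h1 : u < f (α x, β x) := hf _ ⟨x, hx, rfl⟩
    have h2 : f (α x, β x) = α x * f (1, 0) + β x * f (0, 1) := by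
      have : ((α x, β x) : ℝ × ℝ) = α x • (1, 0) + β x • (0, 1) := by simp
      rw [this, map_add, map_smul, map_smul, smul_eq_mul, smul_eq_mul]
    have h3 : |(b - f (1, 0)) * α x| ≤ d * |M| := by
      rw [abs_mul]
      exact mul_le_mul hbd ((hM x hx).trans (le_abs_self M)) (abs_nonneg _) hd.le
    have h4 : |(c - f (0, 1)) * β x| ≤ d * |N| := by
      rw [abs_mul]
      exact mul_le_mul hcd ((hN x hx).trans (le_abs_self N)) (abs_nonneg _) hd.le
    have h5 := (abs_le.1 h3).1
    have h6 := (abs_le.1 h4).1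
    linarith
  refine ⟨b, c, hb, hc, ?_⟩
  rintro x ⟨hx, hx0⟩
  have hn : 0 < F x := lt_of_lt_of_le (mul_pos hm (norm_pos_iff.2 hx0)) (hFn x ⟨hx, hx0⟩)
  have hxB : (F x)⁻¹ • x ∈ B := by
    rw [hB]
    refine ⟨hCsmul _ (by positivity) x hx, ?_⟩
    simp [hn.ne']
  have h := key _ hxB
  rw [map_smul, map_smul, smul_eq_mul, smul_eq_mul] at h
  have h' : 0 < (F x)⁻¹ * (b * α x + c * β x) := by linarith
  exact pos_of_mul_pos_right h' (by positivity)
end
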